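/- There exists a complex linear subspace 𝓗 of the space of functions ℂ → ℂ such that: (i) every F ∈ 𝓗 is entire; (ii) the evaluation map F ↦ (F(tₙ))ₙ∈ℕ is a linear bijection from 𝓗 onto ℓ²(μ) (so ‖F‖² := ∑ₙ μₙ|F(tₙ)|² defines a complete Hilbert space norm on 𝓗); (iii) (H1) whenever F ∈ 𝓗 and F(w) = 0 for some w ∈ ℂ \ ℝ, the function z ↦ F(z)(z − conj w)/(z − w) belongs to 𝓗 and has the same norm; (iv) (H2) for every w ∈ ℂ, the point-evaluation functional F ↦ F(w) is continuous on 𝓗 with respect to this norm; (v) (H3) whenever F ∈ 𝓗, the function F*(z) = conj(F(conj z)) belongs to 𝓗 and has the same norm. In other words, for every measure μ ∈ 𝓜 there exists a de Branges space that is isometrically isomorphic to ℓ²(μ). -/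

import Mathlib

noncomputable section

/-- Membership in the weighted ℓ² space: `∑ n, μ n * ‖v n‖² < ∞`. -/
def Meml2 (μ : ℕ → ℝ) (v : ℕ → ℂ) : Prop :=
  Summable fun n => μ n * ‖v n‖ ^ 2

/-- The ℓ²(μ)-norm-squared of the sequence of values of `F` at the points `tₙ`. -/
def evalNormSq (μ : ℕ → ℝ) (t : ℕ → ℝ) (F : ℂ → ℂ) : ℝ :=
  ∑' n : ℕ, μ n * ‖F (t n)‖ ^ 2

/-!
Multiplying a Weierstrass product with simple zeros at the points `tₙ` by the exponential of a
suitable entire function yields a real entire function `A` with simple zeros at the `tₙ` and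
`∑ₙ 1 / (μₙ |A'(tₙ)|²) < ∞`. The de Branges space consists of the Lagrange series
`F(z) = ∑ₙ vₙ A(z) / (A'(tₙ) (z - tₙ))` with `v ∈ ℓ²(μ)`: by Cauchy–Schwarz they converge and
their point evaluations are bounded, and `F(tₙ) = vₙ`. If `F(w) = 0`, partial fractions show that
replacing `F(z)` by `F(z) (z - conj w) / (z - w)` amounts to multiplying `vₙ` by the unimodular
number `(tₙ - conj w) / (tₙ - w)`, which gives (H1); (H3) holds because `A` and the `tₙ` are real.
-/


open Complex Filter Topology ComplexConjugate

section NormalConvergence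

variable {ι : Type*} {f : ι → ℂ → ℂ}

/-- Normal convergence of a family of functions on the compact subsets of `ℂ`: on every disc about
the origin the family is dominated by a summable sequence, up to finitely many terms. -/
def NormallySummable (f : ι → ℂ → ℂ) : Prop :=
  ∀ R : ℝ, ∃ u : ι → ℝ, Summable u ∧ ∀ᶠ n in cofinite, ∀ z, ‖z‖ ≤ R → ‖f n z‖ ≤ u n

namespace NormallySummable

lemma summable_norm (h : NormallySummable f) (z : ℂ) : Summable fun n => ‖f n z‖ := by
  obtain ⟨u, hu, hfu⟩ := h ‖z‖
  refine hu.of_norm_bounded_eventually ?_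
  filter_upwards [hfu] with n hn
  simpa only [norm_norm] using hn z le_rfl

lemma update_zero [DecidableEq ι] (h : NormallySummable f) (m : ι) :
    NormallySummable (Function.update f m 0) := fun R => by
  obtain ⟨u, hu, hfu⟩ := h R
  refine ⟨u, hu, ?_⟩
  filter_upwards [hfu, (Set.finite_singleton m).eventually_cofinite_notMem] with n hn hnm
  rwa [Function.update_of_ne hnm]

lemma differentiable_tsum (h : NormallySummable f) (hf : ∀ n, Differentiable ℂ (f n)) :
    Differentiable ℂ fun z => ∑' n, f n z := fun z => by
  obtain ⟨u, hu, hfu⟩ := h (‖z‖ + 1)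
  have hz : z ∈ Metric.ball (0 : ℂ) (‖z‖ + 1) := by simp
  have hunif : TendstoUniformlyOn (fun s z => ∑ n ∈ s, f n z) (fun z => ∑' n, f n z) atTop
      (Metric.ball 0 (‖z‖ + 1)) := by
    refine tendstoUniformlyOn_tsum_of_cofinite_eventually hu ?_
    filter_upwards [hfu] with n hn w hw using hn w (mem_ball_zero_iff.1 hw).le
  exact (hunif.tendstoLocallyUniformlyOn.differentiableOn
    (.of_forall fun s => (Differentiable.fun_sum fun n _ => hf n).differentiableOn)
    Metric.isOpen_ball).differentiableAt (Metric.isOpen_ball.mem_nhds hz)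

lemma differentiable_tprod_one_add (h : NormallySummable f) (hf : ∀ n, Differentiable ℂ (f n)) :
    Differentiable ℂ fun z => ∏' n, (1 + f n z) := fun z => by
  obtain ⟨u, hu, hfu⟩ := h (‖z‖ + 1)
  have hz : z ∈ Metric.ball (0 : ℂ) (‖z‖ + 1) := by simp
  have hbound : ∀ᶠ n in cofinite, ∀ w ∈ Metric.ball (0 : ℂ) (‖z‖ + 1), ‖f n w‖ ≤ u n := by
    filter_upwards [hfu] with n hn w hw using hn w (mem_ball_zero_iff.1 hw).le
  have hprod := Summable.hasProdLocallyUniformlyOn_one_add Metric.isOpen_ball hu hbound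
    fun n => (hf n).continuous.continuousOn
  exact (hprod.differentiableOn
    (.of_forall fun s => (Differentiable.fun_finsetProd fun n _ =>
      (hf n).const_add 1).differentiableOn)
    Metric.isOpen_ball).differentiableAt (Metric.isOpen_ball.mem_nhds hz)

lemma tprod_one_add_eq_zero_iff (h : NormallySummable f) (z : ℂ) :
    ∏' n, (1 + f n z) = 0 ↔ ∃ n, 1 + f n z = 0 := by
  refine ⟨fun hz => ?_, tprod_of_exists_eq_zero⟩
  by_contra! hne
  exact tprod_one_add_ne_zero_of_summable hne (h.summable_norm z) hz

lemma tprod_one_add_eq_mul [DecidableEq ι] (h : NormallySummable f) (m : ι) (z : ℂ) :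
    ∏' n, (1 + f n z) = (1 + f m z) * ∏' n, (1 + Function.update f m 0 n z) := by
  have hupdate : Function.update (fun n => 1 + f n z) m 1 =
      fun n => 1 + Function.update f m 0 n z := by
    ext n
    obtain rfl | hn := eq_or_ne n m <;> simp [*]
  rw [Multipliable.tprod_eq_mul_tprod_ite' m]
  · exact congrArg _ (tprod_congr fun n => by rw [← congrFun hupdate n, Function.update_apply])
  · rw [hupdate]
    exact multipliable_one_add_of_summable ((h.update_zero m).summable_norm z)

lemma deriv_tprod_one_add_ne_zero (h : NormallySummable f) (hf : ∀ n, Differentiable ℂ (f n))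
    {m : ι} {z : ℂ} (hm : 1 + f m z = 0) (hderiv : deriv (f m) z ≠ 0)
    (hne : ∀ n ≠ m, 1 + f n z ≠ 0) : deriv (fun z => ∏' n, (1 + f n z)) z ≠ 0 := by
  classical
  let Q (z : ℂ) : ℂ := ∏' n, (1 + Function.update f m 0 n z)
  have hQ : Differentiable ℂ Q := by
    refine (h.update_zero m).differentiable_tprod_one_add fun n => ?_
    obtain rfl | hn := eq_or_ne n m
    · simp
    · simpa only [Function.update_of_ne hn] using hf n
  have hQz : Q z ≠ 0 := by
    rw [Ne, (h.update_zero m).tprod_one_add_eq_zero_iff]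
    rintro ⟨n, hn⟩
    obtain rfl | hnm := eq_or_ne n m
    · simp at hn
    · exact hne n hnm (by simpa only [Function.update_of_ne hnm] using hn)
  have hprod := ((hf m z).hasDerivAt.const_add 1).fun_mul (hQ z).hasDerivAt
  rw [hm, zero_mul, add_zero] at hprod
  rw [funext (h.tprod_one_add_eq_mul m), hprod.deriv]
  exact mul_ne_zero hderiv hQz

end NormallySummable

end NormalConvergence

section WeierstrassProduct

/-- The Weierstrass elementary factor `E_p(z) = (1 - z) exp (z + z² / 2 + ⋯ + z ^ p / p)`. The
polynomial in the exponent is encoded as minus the Taylor polynomial of degree `p` of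
`log (1 + ·)`, evaluated at `-z`. -/
def weierstrassFactor (p : ℕ) (z : ℂ) : ℂ :=
  (1 - z) * exp (-logTaylor (p + 1) (-z))

lemma differentiable_logTaylor (n : ℕ) : Differentiable ℂ (logTaylor n) := by
  unfold logTaylor
  fun_prop

lemma differentiable_weierstrassFactor (p : ℕ) : Differentiable ℂ (weierstrassFactor p) := by
  have := differentiable_logTaylor (p + 1)
  unfold weierstrassFactor
  fun_prop

lemma weierstrassFactor_conj (p : ℕ) (z : ℂ) :
    weierstrassFactor p (conj z) = conj (weierstrassFactor p z) := by
  simp [weierstrassFactor, logTaylor, ← exp_conj]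

lemma weierstrassFactor_eq_zero_iff {p : ℕ} {z : ℂ} : weierstrassFactor p z = 0 ↔ z = 1 := by
  rw [weierstrassFactor, mul_eq_zero, or_iff_left (exp_ne_zero _), sub_eq_zero, eq_comm]

lemma hasDerivAt_weierstrassFactor_one (p : ℕ) :
    HasDerivAt (weierstrassFactor p) (-exp (-logTaylor (p + 1) (-1))) 1 := by
  have hexp : DifferentiableAt ℂ (fun z : ℂ => exp (-logTaylor (p + 1) (-z))) 1 := by
    have := differentiable_logTaylor (p + 1)
    fun_prop
  have hprod := ((hasDerivAt_id (1 : ℂ)).const_sub 1).fun_mul hexp.hasDerivAt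
  simp only [id, sub_self, zero_mul, add_zero, neg_one_mul] at hprod
  exact hprod

lemma norm_weierstrassFactor_sub_one_le (p : ℕ) {z : ℂ} (hz : ‖z‖ ≤ 1 / 2) :
    ‖weierstrassFactor p z - 1‖ ≤ 4 * ‖z‖ ^ (p + 1) := by
  have hz1 : 1 - z ≠ 0 := sub_ne_zero.2 (by rintro rfl; norm_num at hz)
  set r := log (1 + -z) - logTaylor (p + 1) (-z) with hr
  have hexp : weierstrassFactor p z = exp r := by
    rw [hr, sub_eq_add_neg (log _), exp_add, ← sub_eq_add_neg, exp_log hz1, weierstrassFactor]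
  have hr_le : ‖r‖ ≤ 2 * ‖z‖ ^ (p + 1) := calc
    ‖r‖ ≤ ‖-z‖ ^ (p + 1) * (1 - ‖-z‖)⁻¹ / (p + 1) :=
      norm_log_sub_logTaylor_le p (by rw [norm_neg]; linarith)
    _ ≤ ‖z‖ ^ (p + 1) * (1 - ‖z‖)⁻¹ := by
      rw [norm_neg]
      exact div_le_self (mul_nonneg (by positivity) (inv_nonneg.2 (by linarith))) (by simp)
    _ ≤ ‖z‖ ^ (p + 1) * 2 := by
      gcongr
      exact inv_le_of_inv_le₀ two_pos (by linarith)
    _ = 2 * ‖z‖ ^ (p + 1) := mul_comm _ _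
  have hpow : ‖z‖ ^ (p + 1) ≤ 1 / 2 :=
    (pow_le_of_le_one (norm_nonneg z) (by linarith) p.succ_ne_zero).trans hz
  rw [hexp]
  linarith [norm_exp_sub_one_le (show ‖r‖ ≤ 1 by linarith)]

variable {ι : Type*}

/-- The canonical product `∏ₙ E_{pₙ}(z / aₙ)`, which vanishes exactly at the points `aₙ` if these
are nonzero and `∑ₙ (R / |aₙ|) ^ (pₙ + 1) < ∞` for every `R`. -/
def weierstrassProduct (p : ι → ℕ) (a : ι → ℂ) (z : ℂ) : ℂ :=
  ∏' n, weierstrassFactor (p n) (z / a n)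

lemma weierstrassProduct_eq_tprod_one_add (p : ι → ℕ) (a : ι → ℂ) :
    weierstrassProduct p a = fun z => ∏' n, (1 + (weierstrassFactor (p n) (z / a n) - 1)) := by
  simp only [add_sub_cancel]
  rfl

lemma weierstrassProduct_conj (p : ι → ℕ) (a : ι → ℂ) (z : ℂ) :
    weierstrassProduct p (fun n => conj (a n)) (conj z) = conj (weierstrassProduct p a z) := by
  simp only [weierstrassProduct, ← map_div₀, weierstrassFactor_conj]
  exact (Function.LeftInverse.map_tprod _ continuous_conj continuous_conj conj_conj).symm

variable {p : ι → ℕ} {a : ι → ℂ}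

lemma differentiable_weierstrassFactor_div_sub_one (n : ι) :
    Differentiable ℂ fun z => weierstrassFactor (p n) (z / a n) - 1 := by
  have := differentiable_weierstrassFactor (p n)
  fun_prop

lemma normallySummable_weierstrassFactor_sub_one
    (ha : ∀ R : ℝ, Summable fun n => (R / ‖a n‖) ^ (p n + 1)) :
    NormallySummable fun n z => weierstrassFactor (p n) (z / a n) - 1 := fun R => by
  refine ⟨_, (ha R).mul_left 4, ?_⟩
  filter_upwards [(ha (2 * R)).tendsto_cofinite_zero.eventually_le_const one_pos] with n hn z hz
  have hR : 0 ≤ R := (norm_nonneg z).trans hz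
  have hzR : ‖z / a n‖ ≤ R / ‖a n‖ := by
    rw [norm_div]
    gcongr
  have hhalf : ‖z / a n‖ ≤ 1 / 2 := by
    have := (pow_le_one_iff_of_nonneg (by positivity) (p n).succ_ne_zero).1 hn
    rw [mul_div_assoc] at this
    linarith
  calc ‖weierstrassFactor (p n) (z / a n) - 1‖ ≤ 4 * ‖z / a n‖ ^ (p n + 1) :=
        norm_weierstrassFactor_sub_one_le _ hhalf
    _ ≤ 4 * (R / ‖a n‖) ^ (p n + 1) := by gcongr

lemma differentiable_weierstrassProduct
    (ha : ∀ R : ℝ, Summable fun n => (R / ‖a n‖) ^ (p n + 1)) :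
    Differentiable ℂ (weierstrassProduct p a) := by
  rw [weierstrassProduct_eq_tprod_one_add]
  exact (normallySummable_weierstrassFactor_sub_one ha).differentiable_tprod_one_add
    differentiable_weierstrassFactor_div_sub_one

/-- The zeros of `A` are exactly the points `a n`, and they are all simple. -/
structure HasSimpleZeros (A : ℂ → ℂ) (a : ι → ℂ) : Prop where
  eq_zero_iff : ∀ z, A z = 0 ↔ ∃ n, z = a n
  deriv_ne_zero : ∀ n, deriv A (a n) ≠ 0

lemma HasSimpleZeros.apply_eq_zero {A : ℂ → ℂ} (hA : HasSimpleZeros A a) (n : ι) : A (a n) = 0 :=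
  (hA.eq_zero_iff _).2 ⟨n, rfl⟩

lemma hasSimpleZeros_weierstrassProduct (ha_inj : Function.Injective a) (ha_ne : ∀ n, a n ≠ 0)
    (ha : ∀ R : ℝ, Summable fun n => (R / ‖a n‖) ^ (p n + 1)) :
    HasSimpleZeros (weierstrassProduct p a) a := by
  have hsum := normallySummable_weierstrassFactor_sub_one ha
  have hfactor (n : ι) (z : ℂ) : 1 + (weierstrassFactor (p n) (z / a n) - 1) = 0 ↔ z = a n := by
    rw [add_sub_cancel, weierstrassFactor_eq_zero_iff, div_eq_one_iff_eq (ha_ne n)]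
  rw [weierstrassProduct_eq_tprod_one_add]
  refine ⟨fun z => ?_, fun m => ?_⟩
  · simp only [hsum.tprod_one_add_eq_zero_iff, hfactor]
  · refine hsum.deriv_tprod_one_add_ne_zero differentiable_weierstrassFactor_div_sub_one
      ((hfactor m _).2 rfl) ?_ fun n hn => (hfactor n _).not.2 (ha_inj.ne hn.symm)
    have hcomp := (HasDerivAt.comp_of_eq (a m) (hasDerivAt_weierstrassFactor_one (p m))
      ((hasDerivAt_id' (a m)).div_const (a m)) (div_self (ha_ne m)).symm).sub_const 1
    refine hcomp.deriv.trans_ne ?_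
    simp [ha_ne m]

end WeierstrassProduct

section RealEntire

/-- An entire function which is real on the real line, encoded by its invariance under
`f ↦ conj ∘ f ∘ conj`. -/
structure IsRealEntire (f : ℂ → ℂ) : Prop where
  differentiable : Differentiable ℂ f
  map_conj : ∀ z, f (conj z) = conj (f z)

lemma summable_div_pow_succ {r : ℕ → ℝ} (hr : Tendsto r atTop atTop) (R : ℝ) :
    Summable fun n => (R / r n) ^ (n + 1) := by
  refine ((summable_nat_add_iff 1).2 summable_geometric_two).of_norm_bounded_eventually_nat ?_
  filter_upwards [hr.eventually_ge_atTop (2 * |R|), hr.eventually_gt_atTop 0] with n hn hpos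
  rw [norm_pow, norm_div, Real.norm_eq_abs, Real.norm_of_nonneg hpos.le]
  refine pow_le_pow_left₀ (by positivity) ?_ _
  rw [div_le_iff₀ hpos]
  linarith

variable {t : ℕ → ℝ}

/-- Translating by a real number away from all `t n` reduces to nonzero points. -/
lemma exists_isRealEntire_hasSimpleZeros (ht_inj : Function.Injective t)
    (ht : Tendsto (fun n => |t n|) atTop atTop) :
    ∃ P, IsRealEntire P ∧ HasSimpleZeros P fun n => (t n : ℂ) := by
  obtain ⟨c, hc⟩ : ((Set.range t)ᶜ).Nonempty := ((Set.countable_range t).dense_compl ℝ).nonempty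
  let a (n : ℕ) : ℂ := (t n - c : ℝ)
  have ha_inj : Function.Injective a :=
    fun m n h => ht_inj (sub_left_injective (ofReal_injective h))
  have ha_ne (n : ℕ) : a n ≠ 0 := ofReal_ne_zero.2 (sub_ne_zero.2 fun h => hc ⟨n, h⟩)
  have ha_top : Tendsto (fun n => ‖a n‖) atTop atTop := by
    refine tendsto_atTop_mono (fun n => ?_) (tendsto_atTop_add_const_right _ (-|c|) ht)
    rw [norm_real, Real.norm_eq_abs, ← sub_eq_add_neg]
    exact abs_sub_abs_le_abs_sub _ _
  have ha_sum := summable_div_pow_succ ha_top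
  obtain ⟨hzero, hderiv⟩ := hasSimpleZeros_weierstrassProduct (p := id) ha_inj ha_ne ha_sum
  have ha_t (n : ℕ) : (t n : ℂ) - c = a n := (ofReal_sub _ _).symm
  refine ⟨fun z => weierstrassProduct id a (z - c), ⟨?_, fun z => ?_⟩, fun z => ?_, fun n => ?_⟩
  · exact (differentiable_weierstrassProduct ha_sum).comp (differentiable_id.sub_const _)
  · simpa [a] using weierstrassProduct_conj id a (z - c)
  · simp only [hzero, ← ha_t, sub_left_inj]
  · rw [deriv_comp_sub_const, ha_t]
    exact hderiv n

lemma norm_one_add_sq_div_le_half {R s : ℝ} {z : ℂ} (hz : ‖z‖ ≤ R) (hs : 2 * (1 + R ^ 2) ≤ |s|) :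
    ‖(1 + z ^ 2) / (1 + (s : ℂ) ^ 2)‖ ≤ 1 / 2 := by
  have hden : ‖1 + (s : ℂ) ^ 2‖ = 1 + s ^ 2 := by
    rw [← ofReal_pow, ← ofReal_one, ← ofReal_add, norm_real, Real.norm_of_nonneg (by positivity)]
  have hnum : ‖1 + z ^ 2‖ ≤ 1 + R ^ 2 := by
    refine (norm_add_le _ _).trans ?_
    rw [norm_one, norm_pow]
    gcongr
  rw [norm_div, hden, div_le_iff₀ (by positivity)]
  nlinarith [sq_abs s, sq_nonneg R]

/-- Take `g(z) = ∑ₙ |Mₙ| ((1 + z²) / (1 + tₙ²)) ^ eₙ`, with exponents `eₙ` large enough for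
convergence: all terms are nonnegative on `ℝ`, and the `n`-th one equals `|Mₙ|` at `tₙ`. -/
lemma exists_isRealEntire_le_re (ht : Tendsto (fun n => |t n|) atTop atTop) (M : ℕ → ℝ) :
    ∃ g, IsRealEntire g ∧ ∀ n, M n ≤ (g (t n)).re := by
  choose k hk using fun n => pow_unbounded_of_one_lt |M n| (one_lt_two (α := ℝ))
  let q (n : ℕ) (z : ℂ) : ℂ := |M n| * ((1 + z ^ 2) / (1 + (t n : ℂ) ^ 2)) ^ (n + k n)
  have hq (n : ℕ) : Differentiable ℂ (q n) := by
    unfold q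
    fun_prop
  have hq_conj (n : ℕ) (z : ℂ) : q n (conj z) = conj (q n z) := by simp [q]
  have hq_real (n m : ℕ) :
      (q n (t m)).re = |M n| * ((1 + t m ^ 2) / (1 + t n ^ 2)) ^ (n + k n) := by
    rw [← ofReal_re (|M n| * _)]
    simp only [q]
    push_cast
    rfl
  have hsum : NormallySummable q := fun R => by
    refine ⟨_, summable_geometric_two, ?_⟩
    rw [Nat.cofinite_eq_atTop]
    filter_upwards [ht.eventually_ge_atTop (2 * (1 + R ^ 2))] with n hn z hz
    have hratio := norm_one_add_sq_div_le_half hz hn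
    calc ‖q n z‖ = |M n| * ‖(1 + z ^ 2) / (1 + (t n : ℂ) ^ 2)‖ ^ (n + k n) := by
          simp only [q, norm_mul, norm_pow, norm_real, Real.norm_eq_abs, abs_abs]
      _ ≤ 2 ^ k n * (1 / 2) ^ (n + k n) := by gcongr; exact (hk n).le
      _ = (1 / 2) ^ n := by rw [pow_add, mul_left_comm, ← mul_pow]; norm_num
  refine ⟨fun z => ∑' n, q n z, ⟨hsum.differentiable_tsum hq, fun z => ?_⟩, fun m => ?_⟩
  · simp only [hq_conj, conj_tsum]
  · have hsum_re := hasSum_re (hsum.summable_norm (t m)).of_norm.hasSum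
    calc M m ≤ |M m| := le_abs_self _
      _ = (q m (t m)).re := by rw [hq_real, div_self (by positivity), one_pow, mul_one]
      _ ≤ (∑' n, q n (t m)).re := le_hasSum hsum_re m fun n _ => by
          rw [hq_real]
          positivity

lemma HasSimpleZeros.deriv_mul {ι : Type*} {a : ι → ℂ} {P h : ℂ → ℂ} (hP : HasSimpleZeros P a)
    (hPd : Differentiable ℂ P) (hh : Differentiable ℂ h) (n : ι) :
    deriv (fun z => P z * h z) (a n) = deriv P (a n) * h (a n) := by
  rw [deriv_fun_mul (hPd _) (hh _), hP.apply_eq_zero, zero_mul, add_zero]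

lemma exists_isRealEntire_hasSimpleZeros_le_norm_deriv (ht_inj : Function.Injective t)
    (ht : Tendsto (fun n => |t n|) atTop atTop) (B : ℕ → ℝ) :
    ∃ A, IsRealEntire A ∧ (HasSimpleZeros A fun n => (t n : ℂ)) ∧
      ∀ n, B n ≤ ‖deriv A (t n)‖ := by
  obtain ⟨P, hP, hPz⟩ := exists_isRealEntire_hasSimpleZeros ht_inj ht
  obtain ⟨g, hg, hgB⟩ := exists_isRealEntire_le_re ht fun n => B n / ‖deriv P (t n)‖
  have hexp : Differentiable ℂ fun z => exp (g z) := hg.differentiable.cexp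
  have hderiv := hPz.deriv_mul hP.differentiable hexp
  refine ⟨fun z => P z * exp (g z), ⟨hP.differentiable.fun_mul hexp, fun z => ?_⟩,
    ⟨fun z => ?_, fun n => ?_⟩, fun n => ?_⟩
  · simp only [hP.map_conj, hg.map_conj, exp_conj, map_mul]
  · simp only [mul_eq_zero, exp_ne_zero, or_false, hPz.eq_zero_iff]
  · rw [hderiv]
    exact mul_ne_zero (hPz.deriv_ne_zero n) (exp_ne_zero _)
  · have hpos : 0 < ‖deriv P (t n)‖ := norm_pos_iff.2 (hPz.deriv_ne_zero n)
    rw [hderiv, norm_mul, norm_exp, ← div_le_iff₀' hpos]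
    linarith [hgB n, Real.add_one_le_exp (g (t n)).re]

end RealEntire

section DividedDifferences

variable {A : ℂ → ℂ}

lemma differentiable_dslope (hA : Differentiable ℂ A) (s : ℂ) : Differentiable ℂ (dslope A s) := by
  rw [← differentiableOn_univ, differentiableOn_dslope univ_mem]
  exact hA.differentiableOn

lemma dslope_conj_conj (hA : ∀ z, A (conj z) = conj (A z)) (s z : ℂ) :
    dslope A (conj s) (conj z) = conj (dslope A s z) := by
  obtain rfl | hz := eq_or_ne z s
  · have hfun : conj ∘ A ∘ conj = A := funext fun z => by simp [hA]
    have hderiv := congrFun (deriv_conj_conj (f := A)) (conj z)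
    rw [hfun] at hderiv
    simpa only [dslope_same, Function.comp_apply, conj_conj] using hderiv
  · rw [dslope_of_ne _ hz, dslope_of_ne _ ((starRingEnd ℂ).injective.ne hz), slope_def_field,
      slope_def_field, hA, hA]
    simp only [map_div₀, map_sub]

/-- Zeros in the disc of radius `R + 1` are handled by the mean value inequality, the others by
`|A z / (z - s)| ≤ |A z|`. -/
lemma exists_norm_dslope_le (hA : Differentiable ℂ A) (R : ℝ) :
    ∃ C, ∀ s, A s = 0 → ∀ z, ‖z‖ ≤ R → ‖dslope A s z‖ ≤ C := by
  have hcompact := isCompact_closedBall (0 : ℂ) (R + 1)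
  obtain ⟨C₀, hC₀⟩ := hcompact.exists_bound_of_continuousOn hA.continuous.continuousOn
  obtain ⟨C₁, hC₁⟩ := hcompact.exists_bound_of_continuousOn
    (hA.contDiff (n := 1)).continuous_deriv_one.continuousOn
  refine ⟨max C₀ C₁, fun s hs z hz => ?_⟩
  have hz' : z ∈ Metric.closedBall (0 : ℂ) (R + 1) := by
    rw [mem_closedBall_zero_iff]
    linarith
  have hmul : ‖z - s‖ * ‖dslope A s z‖ = ‖A z‖ := by
    rw [← norm_smul, sub_smul_dslope_of_zero hs]
  by_cases hsR : s ∈ Metric.closedBall (0 : ℂ) (R + 1)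
  · refine le_max_of_le_right ?_
    obtain rfl | hzs := eq_or_ne z s
    · simpa only [dslope_same] using hC₁ z hz'
    · have hmean := (convex_closedBall (0 : ℂ) (R + 1)).norm_image_sub_le_of_norm_deriv_le
        (fun w _ => hA w) hC₁ hsR hz'
      rw [hs, sub_zero, ← hmul, mul_comm] at hmean
      exact le_of_mul_le_mul_right hmean (norm_sub_pos_iff.2 hzs)
  · have hdist : 1 ≤ ‖z - s‖ := by
      rw [mem_closedBall_zero_iff] at hsR
      linarith [norm_sub_norm_le s z, norm_sub_rev s z]
    calc ‖dslope A s z‖ ≤ ‖z - s‖ * ‖dslope A s z‖ :=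
          le_mul_of_one_le_left (norm_nonneg _) hdist
      _ ≤ max C₀ C₁ := hmul.trans_le (le_max_of_le_left (hC₀ z hz'))

/-- The partial fraction identity
`(s - w') / ((s - w) (z - s)) = (z - w') / ((z - w) (z - s)) - (w - w') / ((z - w) (w - s))`,
multiplied by `(z - w) A(z)`. -/
lemma sub_mul_dslope_of_zero {s w : ℂ} (hs : A s = 0) (hw : A w ≠ 0) (w' z : ℂ) :
    (z - w) * ((s - w') / (s - w) * dslope A s z) =
      (z - w') * dslope A s z + (w' - w) * A z / A w * dslope A s w := by
  have hws : w - s ≠ 0 := sub_ne_zero.2 fun h => hw (h ▸ hs)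
  have hsw : s - w ≠ 0 := by rwa [← neg_sub, neg_ne_zero]
  have hdw : dslope A s w = A w / (w - s) := by
    rw [eq_div_iff hws, mul_comm]
    exact sub_smul_dslope_of_zero hs w
  rw [hdw, ← sub_smul_dslope_of_zero hs z, smul_eq_mul, ← neg_sub s w]
  field_simp
  ring

end DividedDifferences

section LagrangeSeries

variable {ι : Type*} {A : ℂ → ℂ} {a v v' : ι → ℂ}

/-- The Lagrange interpolation series `∑ₙ vₙ A(z) / (A'(aₙ) (z - aₙ))` with nodes at zeros `aₙ`
of `A`. The quotient `A(z) / (z - aₙ)` is encoded as a divided difference, whose value at `aₙ` is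
`A'(aₙ)` instead of the junk value `0`. -/
def lagrangeSeries (A : ℂ → ℂ) (a v : ι → ℂ) (z : ℂ) : ℂ :=
  ∑' n, v n / deriv A (a n) * dslope A (a n) z

lemma lagrangeSeries_node (hA : HasSimpleZeros A a) (ha : Function.Injective a) (v : ι → ℂ)
    (m : ι) : lagrangeSeries A a v (a m) = v m := by
  rw [lagrangeSeries, tsum_eq_single m]
  · rw [dslope_same, div_mul_cancel₀ _ (hA.deriv_ne_zero m)]
  · intro n hn
    rw [dslope_of_ne _ (ha.ne hn.symm), slope_def_field, hA.apply_eq_zero, hA.apply_eq_zero,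
      sub_self, zero_div, mul_zero]

lemma lagrangeSeries_zero (A : ℂ → ℂ) (a : ι → ℂ) : lagrangeSeries A a 0 = 0 := by
  ext z
  simp [lagrangeSeries]

lemma lagrangeSeries_smul (A : ℂ → ℂ) (a v : ι → ℂ) (c : ℂ) :
    lagrangeSeries A a (c • v) = c • lagrangeSeries A a v := by
  ext z
  simp only [lagrangeSeries, Pi.smul_apply, smul_eq_mul, mul_div_assoc, mul_assoc, tsum_mul_left]

lemma lagrangeSeries_conj (hA : ∀ z, A (conj z) = conj (A z)) (a v : ι → ℂ) (z : ℂ) :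
    lagrangeSeries A (fun n => conj (a n)) (fun n => conj (v n)) (conj z) =
      conj (lagrangeSeries A a v z) := by
  simp only [lagrangeSeries, conj_tsum, ← dslope_same, dslope_conj_conj hA, map_mul, map_div₀]

lemma normallySummable_mul_dslope (hA : Differentiable ℂ A) (ha : ∀ n, A (a n) = 0) {c : ι → ℂ}
    (hc : Summable fun n => ‖c n‖) : NormallySummable fun n z => c n * dslope A (a n) z := by
  intro R
  obtain ⟨C, hC⟩ := exists_norm_dslope_le hA R
  refine ⟨_, hc.mul_right C, .of_forall fun n z hz => ?_⟩
  rw [norm_mul]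
  gcongr
  exact hC _ (ha n) z hz

lemma differentiable_lagrangeSeries (hA : Differentiable ℂ A) (ha : ∀ n, A (a n) = 0)
    (hv : Summable fun n => ‖v n / deriv A (a n)‖) : Differentiable ℂ (lagrangeSeries A a v) :=
  (normallySummable_mul_dslope hA ha hv).differentiable_tsum
    fun n => (differentiable_dslope hA (a n)).const_mul _

lemma summable_lagrangeSeries (hA : Differentiable ℂ A) (ha : ∀ n, A (a n) = 0)
    (hv : Summable fun n => ‖v n / deriv A (a n)‖) (z : ℂ) :
    Summable fun n => v n / deriv A (a n) * dslope A (a n) z :=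
  ((normallySummable_mul_dslope hA ha hv).summable_norm z).of_norm

lemma lagrangeSeries_add (hA : Differentiable ℂ A) (ha : ∀ n, A (a n) = 0)
    (hv : Summable fun n => ‖v n / deriv A (a n)‖)
    (hv' : Summable fun n => ‖v' n / deriv A (a n)‖) :
    lagrangeSeries A a (v + v') = lagrangeSeries A a v + lagrangeSeries A a v' := by
  ext z
  simp only [lagrangeSeries, Pi.add_apply, add_div, add_mul]
  exact (summable_lagrangeSeries hA ha hv z).tsum_add (summable_lagrangeSeries hA ha hv' z)

lemma exists_norm_lagrangeSeries_le (hA : Differentiable ℂ A) (ha : ∀ n, A (a n) = 0) (z : ℂ) :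
    ∃ C, 0 ≤ C ∧ ∀ v : ι → ℂ, Summable (fun n => ‖v n / deriv A (a n)‖) →
      ‖lagrangeSeries A a v z‖ ≤ C * ∑' n, ‖v n / deriv A (a n)‖ := by
  obtain ⟨C, hC⟩ := exists_norm_dslope_le hA ‖z‖
  refine ⟨max C 0, le_max_right _ _, fun v hv => ?_⟩
  refine tsum_of_norm_bounded (hv.hasSum.mul_left _) fun n => ?_
  rw [norm_mul, mul_comm]
  gcongr
  exact le_max_of_le_left (hC _ (ha n) z le_rfl)

lemma sub_mul_lagrangeSeries (hA : Differentiable ℂ A) (ha : ∀ n, A (a n) = 0)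
    (hv : Summable fun n => ‖v n / deriv A (a n)‖) {w : ℂ} (hAw : A w ≠ 0)
    (hw : lagrangeSeries A a v w = 0) (w' z : ℂ) :
    (z - w) * lagrangeSeries A a (fun n => v n * ((a n - w') / (a n - w))) z =
      (z - w') * lagrangeSeries A a v z := by
  have hterm (n : ι) : (z - w) * (v n * ((a n - w') / (a n - w)) / deriv A (a n) *
      dslope A (a n) z) = (z - w') * (v n / deriv A (a n) * dslope A (a n) z) +
        (w' - w) * A z / A w * (v n / deriv A (a n) * dslope A (a n) w) := by
    linear_combination v n / deriv A (a n) * sub_mul_dslope_of_zero (ha n) hAw w' z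
  have hsum := summable_lagrangeSeries hA ha hv
  calc (z - w) * lagrangeSeries A a (fun n => v n * ((a n - w') / (a n - w))) z
      = (z - w') * lagrangeSeries A a v z + (w' - w) * A z / A w * lagrangeSeries A a v w := by
        simp only [lagrangeSeries, ← tsum_mul_left, hterm]
        exact ((hsum z).mul_left _).tsum_add ((hsum w).mul_left _)
    _ = (z - w') * lagrangeSeries A a v z := by rw [hw, mul_zero, add_zero]

end LagrangeSeries

namespace Meml2

variable {μ : ℕ → ℝ} {v w : ℕ → ℂ}

lemma add (hμ : ∀ n, 0 ≤ μ n) (hv : Meml2 μ v) (hw : Meml2 μ w) : Meml2 μ (v + w) := by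
  refine ((Summable.add hv hw).mul_left 2).of_nonneg_of_le
    (fun n => mul_nonneg (hμ n) (by positivity)) fun n => ?_
  calc μ n * ‖v n + w n‖ ^ 2 ≤ μ n * (2 * (‖v n‖ ^ 2 + ‖w n‖ ^ 2)) :=
        mul_le_mul_of_nonneg_left
          ((pow_le_pow_left₀ (norm_nonneg _) (norm_add_le _ _) 2).trans add_sq_le) (hμ n)
    _ = 2 * (μ n * ‖v n‖ ^ 2 + μ n * ‖w n‖ ^ 2) := by ring

lemma smul (c : ℂ) (hv : Meml2 μ v) : Meml2 μ (c • v) := by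
  refine (Summable.mul_left (‖c‖ ^ 2) hv).congr fun n => ?_
  rw [Pi.smul_apply, norm_smul, mul_pow, mul_left_comm]

lemma congr_norm (hv : Meml2 μ v) (h : ∀ n, ‖w n‖ = ‖v n‖) : Meml2 μ w := by
  simpa only [Meml2, h] using hv

lemma summable_and_tsum_norm_mul_le (hμ : ∀ n, 0 < μ n) (hv : Meml2 μ v) (hw : Meml2 μ⁻¹ w) :
    Summable (fun n => ‖v n * w n‖) ∧
      ∑' n, ‖v n * w n‖ ≤ √(∑' n, μ n * ‖v n‖ ^ 2) * √(∑' n, (μ n)⁻¹ * ‖w n‖ ^ 2) := by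
  have hv_sq (n : ℕ) : (√(μ n) * ‖v n‖) ^ (2 : ℝ) = μ n * ‖v n‖ ^ 2 := by
    rw [Real.rpow_two, mul_pow, Real.sq_sqrt (hμ n).le]
  have hw_sq (n : ℕ) : (√(μ n)⁻¹ * ‖w n‖) ^ (2 : ℝ) = (μ n)⁻¹ * ‖w n‖ ^ 2 := by
    rw [Real.rpow_two, mul_pow, Real.sq_sqrt (inv_pos.2 (hμ n)).le]
  have hmul (n : ℕ) : √(μ n) * ‖v n‖ * (√(μ n)⁻¹ * ‖w n‖) = ‖v n * w n‖ := by
    rw [mul_mul_mul_comm, ← Real.sqrt_mul (hμ n).le, mul_inv_cancel₀ (hμ n).ne', Real.sqrt_one,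
      one_mul, norm_mul]
  have hholder := Real.summable_and_inner_le_Lp_mul_Lq_tsum_of_nonneg .two_two
    (f := fun n => √(μ n) * ‖v n‖) (g := fun n => √(μ n)⁻¹ * ‖w n‖)
    (fun n => by positivity) (fun n => by positivity)
    (by simpa only [hv_sq] using! hv) (by simpa only [hw_sq] using! hw)
  simpa only [hv_sq, hw_sq, hmul, ← Real.sqrt_eq_rpow] using hholder

end Meml2

lemma norm_ofReal_sub_conj_div {w : ℂ} (hw : w.im ≠ 0) (s : ℝ) :
    ‖((s : ℂ) - conj w) / (s - w)‖ = 1 := by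
  have hne : (s : ℂ) - w ≠ 0 := sub_ne_zero.2 (by rintro rfl; exact hw (ofReal_im _))
  rw [← conj_ofReal s, ← map_sub, conj_ofReal, norm_div, norm_conj,
    div_self (norm_ne_zero_iff.2 hne)]

lemma evalNormSq_conj (μ t : ℕ → ℝ) (F : ℂ → ℂ) :
    evalNormSq μ t (fun z => conj (F (conj z))) = evalNormSq μ t F := by
  simp only [evalNormSq, conj_ofReal, norm_conj]

lemma tendsto_abs_atTop_of_finite {ι : Type*} {t : ι → ℝ} (ht : ∀ R : ℝ, {n | |t n| ≤ R}.Finite) :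
    Tendsto (fun n => |t n|) cofinite atTop := by
  refine tendsto_atTop.2 fun R => ?_
  filter_upwards [(ht R).eventually_cofinite_notMem] with n hn using (not_le.1 hn).le

section LagrangeSpace

variable {μ t : ℕ → ℝ} {A F : ℂ → ℂ}

/-- A real entire function with simple zeros at the points `t n` for which
`∑ₙ 1 / (μₙ |A'(tₙ)|²) < ∞`, so that the Lagrange series of every sequence in `ℓ²(μ)` converges. -/
structure IsGeneratingFunction (μ t : ℕ → ℝ) (A : ℂ → ℂ) : Prop extends IsRealEntire A where
  hasSimpleZeros : HasSimpleZeros A fun n => (t n : ℂ)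
  meml2_inv_deriv : Meml2 μ⁻¹ fun n => (deriv A (t n))⁻¹

lemma exists_isGeneratingFunction (hμ : ∀ n, 0 < μ n) (ht : Function.Injective t)
    (ht_top : Tendsto (fun n => |t n|) atTop atTop) : ∃ A, IsGeneratingFunction μ t A := by
  obtain ⟨A, hA, hAz, hA_le⟩ :=
    exists_isRealEntire_hasSimpleZeros_le_norm_deriv ht ht_top fun n => √(2 ^ n / μ n)
  refine ⟨A, hA, hAz, summable_geometric_two.of_nonneg_of_le (fun n => ?_) fun n => ?_⟩
  · exact mul_nonneg (inv_nonneg.2 (hμ n).le) (sq_nonneg _)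
  · have hμn := hμ n
    have hsq : 2 ^ n / μ n ≤ ‖deriv A (t n)‖ ^ 2 := (Real.sqrt_le_left (norm_nonneg _)).1 (hA_le n)
    calc (μ n)⁻¹ * ‖(deriv A (t n))⁻¹‖ ^ 2 = (μ n)⁻¹ * (‖deriv A (t n)‖ ^ 2)⁻¹ := by
          rw [norm_inv, inv_pow]
      _ ≤ (μ n)⁻¹ * (2 ^ n / μ n)⁻¹ := by gcongr
      _ = (1 / 2) ^ n := by rw [inv_div, one_div_pow]; field_simp

namespace IsGeneratingFunction

lemma summable_coeff (hA : IsGeneratingFunction μ t A) (hμ : ∀ n, 0 < μ n) {v : ℕ → ℂ}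
    (hv : Meml2 μ v) : Summable fun n => ‖v n / deriv A (t n)‖ := by
  simpa only [div_eq_mul_inv] using (hv.summable_and_tsum_norm_mul_le hμ hA.meml2_inv_deriv).1

/-- The space of the Lagrange series with nodes `t n` of all sequences in `ℓ²(μ)`. -/
def lagrangeSpace (hA : IsGeneratingFunction μ t A) (hμ : ∀ n, 0 < μ n) :
    Submodule ℂ (ℂ → ℂ) where
  carrier := lagrangeSeries A (fun n => (t n : ℂ)) '' {v | Meml2 μ v}
  zero_mem' := ⟨0, by simp [Meml2, summable_zero], lagrangeSeries_zero _ _⟩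
  add_mem' := by
    rintro _ _ ⟨v, hv, rfl⟩ ⟨w, hw, rfl⟩
    exact ⟨v + w, Meml2.add (fun n => (hμ n).le) hv hw,
      lagrangeSeries_add hA.differentiable hA.hasSimpleZeros.apply_eq_zero
        (hA.summable_coeff hμ hv) (hA.summable_coeff hμ hw)⟩
  smul_mem' := by
    rintro c _ ⟨v, hv, rfl⟩
    exact ⟨c • v, Meml2.smul c hv, lagrangeSeries_smul _ _ _ _⟩

variable {hA : IsGeneratingFunction μ t A} {hμ : ∀ n, 0 < μ n}

lemma differentiable_of_mem (hF : F ∈ hA.lagrangeSpace hμ) : Differentiable ℂ F := by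
  obtain ⟨v, hv, rfl⟩ := hF
  exact differentiable_lagrangeSeries hA.differentiable hA.hasSimpleZeros.apply_eq_zero
    (hA.summable_coeff hμ hv)

lemma lagrangeSeries_mem {v : ℕ → ℂ} (hv : Meml2 μ v) :
    lagrangeSeries A (fun n => (t n : ℂ)) v ∈ hA.lagrangeSpace hμ :=
  ⟨v, hv, rfl⟩

lemma lagrangeSeries_apply (hA : IsGeneratingFunction μ t A) (ht : Function.Injective t)
    (v : ℕ → ℂ) (n : ℕ) : lagrangeSeries A (fun n => (t n : ℂ)) v (t n) = v n :=
  lagrangeSeries_node hA.hasSimpleZeros (ofReal_injective.comp ht) v n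

lemma meml2_of_mem (ht : Function.Injective t) (hF : F ∈ hA.lagrangeSpace hμ) :
    Meml2 μ fun n => F (t n) := by
  obtain ⟨v, hv, rfl⟩ := hF
  simpa only [hA.lagrangeSeries_apply ht] using! hv

lemma lagrangeSeries_eq_of_mem (ht : Function.Injective t) (hF : F ∈ hA.lagrangeSpace hμ) :
    lagrangeSeries A (fun n => (t n : ℂ)) (fun n => F (t n)) = F := by
  obtain ⟨v, -, rfl⟩ := hF
  simp only [hA.lagrangeSeries_apply ht]

lemma eq_of_forall_node_eq (ht : Function.Injective t) {G : ℂ → ℂ} (hF : F ∈ hA.lagrangeSpace hμ)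
    (hG : G ∈ hA.lagrangeSpace hμ) (hFG : ∀ n, F (t n) = G (t n)) : F = G := by
  rw [← lagrangeSeries_eq_of_mem ht hF, funext hFG, lagrangeSeries_eq_of_mem ht hG]

lemma exists_mem_forall_node_eq (ht : Function.Injective t) {v : ℕ → ℂ} (hv : Meml2 μ v) :
    ∃ F ∈ hA.lagrangeSpace hμ, ∀ n, F (t n) = v n :=
  ⟨_, lagrangeSeries_mem hv, hA.lagrangeSeries_apply ht v⟩

lemma apply_ne_zero (hA : IsGeneratingFunction μ t A) {w : ℂ} (hw : w.im ≠ 0) : A w ≠ 0 := by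
  rw [Ne, hA.hasSimpleZeros.eq_zero_iff]
  rintro ⟨n, rfl⟩
  exact hw (ofReal_im _)

lemma exists_mem_eq_mul_div (ht : Function.Injective t) (hF : F ∈ hA.lagrangeSpace hμ) {w : ℂ}
    (hw : w.im ≠ 0) (hFw : F w = 0) :
    ∃ G ∈ hA.lagrangeSpace hμ, (∀ z, z ≠ w → G z = F z * (z - conj w) / (z - w)) ∧
      evalNormSq μ t G = evalNormSq μ t F := by
  obtain ⟨v, hv, rfl⟩ := hF
  let b (n : ℕ) : ℂ := v n * ((t n - conj w) / (t n - w))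
  have hb (n : ℕ) : ‖b n‖ = ‖v n‖ := by
    rw [norm_mul, norm_ofReal_sub_conj_div hw, mul_one]
  refine ⟨_, lagrangeSeries_mem (hv.congr_norm hb), fun z hz => ?_, ?_⟩
  · rw [eq_div_iff (sub_ne_zero.2 hz), mul_comm, mul_comm _ (z - _)]
    exact sub_mul_lagrangeSeries hA.differentiable hA.hasSimpleZeros.apply_eq_zero
      (hA.summable_coeff hμ hv) (hA.apply_ne_zero hw) hFw _ z
  · simp only [evalNormSq, hA.lagrangeSeries_apply ht, hb]

lemma exists_norm_apply_le (hA : IsGeneratingFunction μ t A) (hμ : ∀ n, 0 < μ n)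
    (ht : Function.Injective t) (w : ℂ) :
    ∃ C, ∀ F ∈ hA.lagrangeSpace hμ, ‖F w‖ ≤ C * √(evalNormSq μ t F) := by
  obtain ⟨C, hC, hbound⟩ :=
    exists_norm_lagrangeSeries_le hA.differentiable hA.hasSimpleZeros.apply_eq_zero w
  let K := √(∑' n, (μ n)⁻¹ * ‖(deriv A (t n))⁻¹‖ ^ 2)
  refine ⟨C * K, ?_⟩
  rintro _ ⟨v, hv, rfl⟩
  have hcs := (hv.summable_and_tsum_norm_mul_le hμ hA.meml2_inv_deriv).2
  simp only [← div_eq_mul_inv] at hcs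
  simp only [evalNormSq, hA.lagrangeSeries_apply ht]
  calc ‖lagrangeSeries A (fun n => (t n : ℂ)) v w‖ ≤ C * ∑' n, ‖v n / deriv A (t n)‖ :=
        hbound v (hA.summable_coeff hμ hv)
    _ ≤ C * (√(∑' n, μ n * ‖v n‖ ^ 2) * K) := by gcongr
    _ = C * K * √(∑' n, μ n * ‖v n‖ ^ 2) := by ring

lemma conj_mem (hF : F ∈ hA.lagrangeSpace hμ) :
    (fun z => conj (F (conj z))) ∈ hA.lagrangeSpace hμ := by
  obtain ⟨v, hv, rfl⟩ := hF
  refine ⟨fun n => conj (v n), hv.congr_norm fun n => norm_conj _, ?_⟩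
  ext z
  simpa using lagrangeSeries_conj hA.map_conj (fun n => (t n : ℂ)) v (conj z)

end IsGeneratingFunction

end LagrangeSpace

/-- **Theorem.** For every measure `μ ∈ 𝓜` (given by distinct real points `tₙ`
forming a discrete set and positive masses `μₙ`) there exists a de Branges
space that is isometrically isomorphic to `ℓ²(μ)`: a complex linear space `𝓗`
of entire functions such that evaluation `F ↦ (F(tₙ))ₙ` is a linear bijection
onto `ℓ²(μ)`, satisfying the axioms (H1), (H2), (H3) with respect to the norm
`‖F‖² = ∑ₙ μₙ |F(tₙ)|²`. In (H1) the quotient `F(z)(z − conj w)/(z − w)` is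
understood with its removable singularity at `w` filled in, i.e. as the unique
member `G` of `𝓗` agreeing with it away from `w`. -/
theorem exists_deBranges_space_isometric_to_l2
    (μ : ℕ → ℝ) (hμ : ∀ n, 0 < μ n)
    (t : ℕ → ℝ) (ht : Function.Injective t)
    (hdisc : ∀ R : ℝ, {n : ℕ | |t n| ≤ R}.Finite) :
    ∃ H : Set (ℂ → ℂ),
      -- 𝓗 is a complex linear subspace of entire functions
      (0 : ℂ → ℂ) ∈ H ∧
      (∀ F ∈ H, ∀ G ∈ H, F + G ∈ H) ∧
      (∀ c : ℂ, ∀ F ∈ H, c • F ∈ H) ∧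
      (∀ F ∈ H, Differentiable ℂ F) ∧
      -- evaluation is a bijection onto ℓ²(μ)
      (∀ F ∈ H, Meml2 μ (fun n => F (t n))) ∧
      (∀ F ∈ H, ∀ G ∈ H, (∀ n : ℕ, F (t n) = G (t n)) → F = G) ∧
      (∀ v : ℕ → ℂ, Meml2 μ v → ∃ F ∈ H, ∀ n : ℕ, F (t n) = v n) ∧
      -- (H1), with equality of norms
      (∀ F ∈ H, ∀ w : ℂ, w.im ≠ 0 → F w = 0 →
        ∃ G ∈ H, (∀ z : ℂ, z ≠ w → G z = F z * (z - (starRingEnd ℂ) w) / (z - w)) ∧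
          evalNormSq μ t G = evalNormSq μ t F) ∧
      -- (H2): every point evaluation is a bounded (hence continuous) functional
      (∀ w : ℂ, ∃ C : ℝ, ∀ F ∈ H, ‖F w‖ ≤ C * Real.sqrt (evalNormSq μ t F)) ∧
      -- (H3), with equality of norms
      (∀ F ∈ H, (fun z => (starRingEnd ℂ) (F ((starRingEnd ℂ) z))) ∈ H ∧
        evalNormSq μ t (fun z => (starRingEnd ℂ) (F ((starRingEnd ℂ) z))) =
          evalNormSq μ t F) := by
  obtain ⟨A, hA⟩ := exists_isGeneratingFunction hμ ht
    (Nat.cofinite_eq_atTop ▸ tendsto_abs_atTop_of_finite hdisc)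
  exact ⟨hA.lagrangeSpace hμ, zero_mem _, fun F hF G hG => add_mem hF hG,
    fun c F hF => Submodule.smul_mem _ c hF, fun F hF => hA.differentiable_of_mem hF,
    fun F hF => hA.meml2_of_mem ht hF,
    fun F hF G hG hFG => hA.eq_of_forall_node_eq ht hF hG hFG,
    fun v hv => hA.exists_mem_forall_node_eq ht hv,
    fun F hF w hw hFw => hA.exists_mem_eq_mul_div ht hF hw hFw,
    hA.exists_norm_apply_le hμ ht, fun F hF => ⟨hA.conj_mem hF, evalNormSq_conj μ t F⟩⟩
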